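/- Structure of the inhomogeneity Φ (Lemma 5.7): Assume additionally b̃ ≥ m. Let α ∈ G ∪ N, let u be the corresponding solution, let ξ₁ = (b̃/ã)^{m/2} and τ₁ ∈ (0, b(α)) the unique point with u(τ₁) = ξ₁, and set β̄ = m·(1 − b̃/(ã·α^{2/m})) (which is positive since α > ξ₁). For β ∈ (0, β̄) define Φ_β(τ) = (2β·ã/m)·u(τ)^{1+2/m} − 2·cosh(τ)·f(u(τ)). Then there is a unique σ(β) ∈ (0, τ₁) such that Φ_β < 0 on (0, σ(β)) and Φ_β > 0 on (σ(β), b(α)); moreover β ↦ σ(β) is continuous and strictly decreasing on (0, β̄). -/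

import Mathlib

open Set Filter

/-- Continuity of sinh times the derivative of u, up to zero. -/
lemma aux_w_cont (u : ℝ → ℝ)
    (hud' : ∀ τ ∈ Ioi (0 : ℝ), DifferentiableAt ℝ (deriv u) τ)
    (hu'0 : Tendsto (deriv u) (nhdsWithin 0 (Ioi 0)) (nhds 0)) :
    ContinuousOn (fun t => Real.sinh t * deriv u t) (Ici 0) := by
  intro t ht
  rcases eq_or_lt_of_le (show (0:ℝ) ≤ t from ht) with h | h
  · subst h
    have h1 : Tendsto (fun t => Real.sinh t * deriv u t) (nhdsWithin 0 (Ioi 0)) (nhds (0 * 0)) := by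
      apply Tendsto.mul _ hu'0
      have := Real.continuous_sinh.continuousWithinAt (s := Ioi (0:ℝ)) (x := 0)
      simpa [ContinuousWithinAt] using this
    have h2 : ContinuousWithinAt (fun t => Real.sinh t * deriv u t) (Ioi 0) 0 := by
      unfold ContinuousWithinAt
      simpa using h1
    have h3 := h2.insert
    rwa [Ioi_insert] at h3
  · exact (Real.continuous_sinh.continuousAt.mul (hud' t h).continuousAt).continuousWithinAt

lemma aux_w_deriv (u F : ℝ → ℝ)
    (hud' : ∀ τ ∈ Ioi (0 : ℝ), DifferentiableAt ℝ (deriv u) τ)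
    (hode : ∀ τ ∈ Ioi (0 : ℝ),
      deriv (deriv u) τ + (Real.cosh τ / Real.sinh τ) * deriv u τ + F (u τ) = 0)
    (t : ℝ) (ht : 0 < t) :
    HasDerivAt (fun t => Real.sinh t * deriv u t) (- Real.sinh t * F (u t)) t := by
  have h := (Real.hasDerivAt_sinh t).mul (hud' t ht).hasDerivAt
  have hs : 0 < Real.sinh t := Real.sinh_pos_iff.2 ht
  have e := hode t ht
  refine HasDerivAt.congr_deriv h ?_
  have : deriv (deriv u) t = - (Real.cosh t / Real.sinh t) * deriv u t - F (u t) := by linarith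
  rw [this]
  field_simp
  ring

lemma aux_w_neg (u F : ℝ → ℝ)
    (hud' : ∀ τ ∈ Ioi (0 : ℝ), DifferentiableAt ℝ (deriv u) τ)
    (hode : ∀ τ ∈ Ioi (0 : ℝ),
      deriv (deriv u) τ + (Real.cosh τ / Real.sinh τ) * deriv u τ + F (u τ) = 0)
    (hu'0 : Tendsto (deriv u) (nhdsWithin 0 (Ioi 0)) (nhds 0))
    (t : ℝ) (ht : 0 < t) (hpos : ∀ s ∈ Ioo 0 t, 0 < F (u s)) : deriv u t < 0 := by
  have hanti : StrictAntiOn (fun t => Real.sinh t * deriv u t) (Icc 0 t) := by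
    apply strictAntiOn_of_deriv_neg (convex_Icc 0 t)
    · exact (aux_w_cont u hud' hu'0).mono Icc_subset_Ici_self
    · intro s hs
      rw [interior_Icc] at hs
      rw [(aux_w_deriv u F hud' hode s hs.1).deriv]
      have := mul_pos (Real.sinh_pos_iff.2 hs.1) (hpos s hs)
      linarith
  have h := hanti (left_mem_Icc.2 ht.le) (right_mem_Icc.2 ht.le) ht
  simp only [Real.sinh_zero, zero_mul] at h
  have hs : 0 < Real.sinh t := Real.sinh_pos_iff.2 ht
  by_contra hc
  push Not at hc
  have := mul_nonneg hs.le hc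
  linarith

lemma aux_w_bound (u F : ℝ → ℝ)
    (hud' : ∀ τ ∈ Ioi (0 : ℝ), DifferentiableAt ℝ (deriv u) τ)
    (hode : ∀ τ ∈ Ioi (0 : ℝ),
      deriv (deriv u) τ + (Real.cosh τ / Real.sinh τ) * deriv u τ + F (u τ) = 0)
    (hu'0 : Tendsto (deriv u) (nhdsWithin 0 (Ioi 0)) (nhds 0))
    (t : ℝ) (ht : 0 < t) (hpos : ∀ s ∈ Ioo 0 t, F (u t) ≤ F (u s)) :
    F (u t) * (Real.cosh t - 1) ≤ - (Real.sinh t * deriv u t) := by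
  have hd : ∀ s, 0 < s → HasDerivAt (fun s => Real.sinh s * deriv u s + F (u t) * (Real.cosh s - 1))
      (- Real.sinh s * F (u s) + F (u t) * Real.sinh s) s := by
    intro s hs
    exact (aux_w_deriv u F hud' hode s hs).add
      (((Real.hasDerivAt_cosh s).sub_const 1).const_mul (F (u t)))
  have hanti : AntitoneOn (fun s => Real.sinh s * deriv u s + F (u t) * (Real.cosh s - 1))
      (Icc 0 t) := by
    apply antitoneOn_of_deriv_nonpos (convex_Icc 0 t)
    · apply ContinuousOn.add
      · exact (aux_w_cont u hud' hu'0).mono Icc_subset_Ici_self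
      · exact (continuous_const.mul (Real.continuous_cosh.sub continuous_const)).continuousOn
    · intro s hs
      rw [interior_Icc] at hs
      exact (hd s hs.1).differentiableAt.differentiableWithinAt
    · intro s hs
      rw [interior_Icc] at hs
      rw [(hd s hs.1).deriv]
      nlinarith [Real.sinh_pos_iff.2 hs.1, hpos s hs]
  have h := hanti (left_mem_Icc.2 ht.le) (right_mem_Icc.2 ht.le) ht.le
  simp only [Real.sinh_zero, zero_mul, Real.cosh_zero, sub_self, mul_zero, add_zero] at h
  linarith

/-- The energy is nonincreasing. -/
lemma aux_energy (u F G : ℝ → ℝ) (hG : ∀ s, HasDerivAt G (F s) s)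
    (hud : ∀ τ ∈ Ioi (0 : ℝ), DifferentiableAt ℝ u τ)
    (hud' : ∀ τ ∈ Ioi (0 : ℝ), DifferentiableAt ℝ (deriv u) τ)
    (hode : ∀ τ ∈ Ioi (0 : ℝ),
      deriv (deriv u) τ + (Real.cosh τ / Real.sinh τ) * deriv u τ + F (u τ) = 0)
    (s t : ℝ) (hs : 0 < s) (hst : s ≤ t) (h0 : deriv u s = 0) : G (u t) ≤ G (u s) := by
  have hd : ∀ r, 0 < r → HasDerivAt (fun r => deriv u r ^ 2 / 2 + G (u r))
      (deriv u r * deriv (deriv u) r + F (u r) * deriv u r) r := by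
    intro r hr
    have h1 := ((hud' r hr).hasDerivAt.pow 2).div_const 2
    have h2 := (hG (u r)).comp r (hud r hr).hasDerivAt
    refine HasDerivAt.congr_deriv (h1.add h2) ?_
    norm_num
    ring
  have hanti : AntitoneOn (fun r => deriv u r ^ 2 / 2 + G (u r)) (Icc s t) := by
    apply antitoneOn_of_deriv_nonpos (convex_Icc s t)
    · intro r hr
      exact (hd r (hs.trans_le hr.1)).continuousAt.continuousWithinAt
    · intro r hr
      rw [interior_Icc] at hr
      exact (hd r (hs.trans hr.1)).differentiableAt.differentiableWithinAt
    · intro r hr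
      rw [interior_Icc] at hr
      have hr0 := hs.trans hr.1
      rw [(hd r hr0).deriv]
      have e := hode r hr0
      have : deriv (deriv u) r = - (Real.cosh r / Real.sinh r) * deriv u r - F (u r) := by linarith
      rw [this]
      have : 0 ≤ (Real.cosh r / Real.sinh r) * (deriv u r)^2 :=
        mul_nonneg (div_nonneg (Real.cosh_pos r).le (Real.sinh_pos_iff.2 hr0).le) (sq_nonneg _)
      nlinarith
  have h := hanti (left_mem_Icc.2 hst) (right_mem_Icc.2 hst) hst
  simp only [h0] at h
  nlinarith [sq_nonneg (deriv u t)]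

/-- The derivative is negative on all of the positivity interval. -/
lemma aux_deriv_neg (u F G : ℝ → ℝ) (hG : ∀ s, HasDerivAt G (F s) s)
    (huc : ContinuousOn u (Ici 0))
    (hud : ∀ τ ∈ Ioi (0 : ℝ), DifferentiableAt ℝ u τ)
    (hud' : ∀ τ ∈ Ioi (0 : ℝ), DifferentiableAt ℝ (deriv u) τ)
    (hode : ∀ τ ∈ Ioi (0 : ℝ),
      deriv (deriv u) τ + (Real.cosh τ / Real.sinh τ) * deriv u τ + F (u τ) = 0)
    (hu'0 : Tendsto (deriv u) (nhdsWithin 0 (Ioi 0)) (nhds 0))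
    (ξ : ℝ) (hξ : 0 < ξ) (hFpos : ∀ s, ξ < s → 0 < F s) (hGneg : ∀ s, 0 < s → s ≤ ξ → G s < 0)
    (hu0 : ξ < u 0)
    (S : Set ℝ) (hS0 : S ⊆ Ioi 0) (hS : ∀ t ∈ S, ∀ s, 0 < s → s ≤ t → s ∈ S)
    (hpos : ∀ t ∈ S, 0 < u t)
    (hEn : ∀ t ∈ S, ∀ c < 0, ∃ τ ∈ S, t ≤ τ ∧ c < G (u τ)) :
    ∀ t ∈ S, deriv u t < 0 := by
  by_contra! hcon
  obtain ⟨t, htS, ht⟩ := hcon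
  have ht0 : 0 < t := hS0 htS
  -- near zero
  have hnear : ∃ ε > 0, ∀ s, 0 ≤ s → s < ε → ξ < u s := by
    have h1 : ∀ᶠ s in nhdsWithin 0 (Ici (0:ℝ)), ξ < u s :=
      (huc 0 self_mem_Ici).eventually_const_lt hu0
    rw [eventually_nhdsWithin_iff, Metric.eventually_nhds_iff] at h1
    obtain ⟨ε, hε, h⟩ := h1
    refine ⟨ε, hε, fun s hs hsε => h ?_ hs⟩
    rw [Real.dist_eq, sub_zero, abs_of_nonneg hs]
    exact hsε
  obtain ⟨ε, hε, hεu⟩ := hnear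
  have hneg0 : ∀ s, 0 < s → s < ε → deriv u s < 0 := fun s hs hsε =>
    aux_w_neg u F hud' hode hu'0 s hs (fun r hr => hFpos _ (hεu r hr.1.le (hr.2.trans hsε)))
  have hεt : ε ≤ t := by
    by_contra hc
    exact absurd (hneg0 t ht0 (not_le.1 hc)) (not_lt.2 ht)
  have hdc : ContinuousOn (deriv u) (Icc ε t) := fun s hs =>
    (hud' s (hε.trans_le hs.1)).continuousAt.continuousWithinAt
  have hclosed : IsCompact (Icc ε t ∩ deriv u ⁻¹' Ici 0) :=
    isCompact_Icc.of_isClosed_subset (hdc.preimage_isClosed_of_isClosed isClosed_Icc isClosed_Ici)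
      inter_subset_left
  obtain ⟨t0, ht0m, hmin⟩ := hclosed.exists_isLeast ⟨t, ⟨hεt, le_rfl⟩, ht⟩
  have ht00 : 0 < t0 := hε.trans_le ht0m.1.1
  have hnegb : ∀ s, 0 < s → s < t0 → deriv u s < 0 := by
    intro s hs hst
    by_contra hc
    push Not at hc
    have hes : ε ≤ s := by
      by_contra hc'
      exact absurd (hneg0 s hs (not_le.1 hc')) (not_lt.2 hc)
    exact absurd (hmin ⟨⟨hes, hst.le.trans ht0m.1.2⟩, hc⟩) (not_le.2 hst)
  have ht0S : t0 ∈ S := hS t htS t0 ht00 ht0m.1.2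
  have hanti : StrictAntiOn u (Icc 0 t0) := by
    apply strictAntiOn_of_deriv_neg (convex_Icc 0 t0)
    · exact huc.mono Icc_subset_Ici_self
    · intro s hs
      rw [interior_Icc] at hs
      exact hnegb s hs.1 hs.2
  have hd0 : 0 ≤ deriv u t0 := ht0m.2
  rcases le_or_gt ξ (u t0) with hc | hc
  · have := aux_w_neg u F hud' hode hu'0 t0 ht00 (fun r hr => hFpos _ (hc.trans_lt
      (hanti ⟨hr.1.le, hr.2.le⟩ (right_mem_Icc.2 ht00.le) hr.2)))
    linarith
  · have hle : deriv u t0 ≤ 0 := by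
      have hcw : Tendsto (deriv u) (nhdsWithin t0 (Iio t0)) (nhds (deriv u t0)) :=
        (hud' t0 ht00).continuousAt.continuousWithinAt
      apply le_of_tendsto hcw
      have : Ioo 0 t0 ∈ nhdsWithin t0 (Iio t0) := Ioo_mem_nhdsLT ht00
      filter_upwards [this] with s hs
      exact (hnegb s hs.1 hs.2).le
    have heq : deriv u t0 = 0 := le_antisymm hle hd0
    obtain ⟨τ, hτS, hτ, hτG⟩ := hEn t0 ht0S _ (hGneg _ (hpos t0 ht0S) hc.le)
    have := aux_energy u F G hG hud hud' hode t0 τ ht00 hτ heq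
    linarith

/-- Abstract inversion of a strictly decreasing function. -/
lemma aux_inverse (H : ℝ → ℝ) (τ₁ B : ℝ) (hτ : 0 < τ₁) (hH : StrictAntiOn H (Icc 0 τ₁))
    (hc : ContinuousOn H (Icc 0 τ₁)) (h0 : H 0 = B) (h1 : H τ₁ = 0) :
    ∃ σ : ℝ → ℝ, (∀ β ∈ Ioo 0 B, σ β ∈ Ioo 0 τ₁ ∧ H (σ β) = β) ∧
      ContinuousOn σ (Ioo 0 B) ∧ StrictAntiOn σ (Ioo 0 B) := by
  have hex : ∀ β, ∃ s, β ∈ Ioo 0 B → s ∈ Ioo 0 τ₁ ∧ H s = β := by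
    intro β
    by_cases hβ : β ∈ Ioo 0 B
    · have := intermediate_value_Ioo' hτ.le hc
      rw [h0, h1] at this
      obtain ⟨s, hs, e⟩ := this hβ
      exact ⟨s, fun _ => ⟨hs, e⟩⟩
    · exact ⟨0, fun h => absurd h hβ⟩
  choose σ hσ using hex
  have hanti : StrictAntiOn σ (Ioo 0 B) := by
    intro x hx y hy hxy
    have h1 := hσ x hx
    have h2 := hσ y hy
    rw [← hH.lt_iff_gt (Ioo_subset_Icc_self h1.1) (Ioo_subset_Icc_self h2.1), h1.2, h2.2]
    exact hxy
  refine ⟨σ, hσ, ?_, hanti⟩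
  intro β hβ
  apply ContinuousAt.continuousWithinAt
  have hneg : ContinuousAt (fun x => - σ x) β := by
    apply continuousAt_of_monotoneOn_of_image_mem_nhds (s := Ioo 0 B)
    · intro x hx y hy hxy
      exact neg_le_neg (hanti.antitoneOn hx hy hxy)
    · exact Ioo_mem_nhds hβ.1 hβ.2
    · have hmem : Ioo (-τ₁) 0 ∈ nhds (- σ β) := by
        have := (hσ β hβ).1
        exact Ioo_mem_nhds (by linarith [this.2]) (by linarith [this.1])
      apply mem_of_superset hmem
      intro y hy
      have hy' : -y ∈ Icc 0 τ₁ := ⟨by linarith [hy.2], by linarith [hy.1]⟩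
      have hb : H (-y) ∈ Ioo 0 B := by
        constructor
        · rw [← h1]
          exact hH hy' (right_mem_Icc.2 hτ.le) (by linarith [hy.1])
        · rw [← h0]
          exact hH (left_mem_Icc.2 hτ.le) hy' (by linarith [hy.2])
      refine ⟨H (-y), hb, ?_⟩
      have := hσ _ hb
      have := hH.injOn (Ioo_subset_Icc_self this.1) hy' this.2
      simp only [this, neg_neg]
  have h2 := hneg.neg
  simp only [neg_neg, Pi.neg_def] at h2
  exact h2

lemma aux_main
    (m a b : ℝ) (hm : 2 < m) (ha : 0 < a) (hb : m ≤ b)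
    (F : ℝ → ℝ) (hF : ∀ s, F s = a * s ^ (1 + 2 / m) - b * s)
    (G : ℝ → ℝ) (hG : ∀ s, G s = a / (2 + 2 / m) * s ^ (2 + 2 / m) - b / 2 * s ^ 2)
    (α : ℝ) (hα : 0 < α)
    (u : ℝ → ℝ)
    (huc : ContinuousOn u (Ici 0))
    (hud : ∀ τ ∈ Ioi (0 : ℝ), DifferentiableAt ℝ u τ)
    (hud' : ∀ τ ∈ Ioi (0 : ℝ), DifferentiableAt ℝ (deriv u) τ)
    (hode : ∀ τ ∈ Ioi (0 : ℝ),
      deriv (deriv u) τ + (Real.cosh τ / Real.sinh τ) * deriv u τ + F (u τ) = 0)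
    (hu0 : u 0 = α)
    (hu'0 : Tendsto (deriv u) (nhdsWithin 0 (Ioi 0)) (nhds 0))
    (ξ₁ : ℝ) (hξ₁ : ξ₁ = (b / a) ^ (m / 2))
    (βmax : ℝ) (hβmax : βmax = m * (1 - b / (a * α ^ (2 / m))))
    (P : ℝ → ℝ → ℝ)
    (hP : ∀ β τ, P β τ = 2 * β * a / m * u τ ^ (1 + 2 / m)
        - 2 * Real.cosh τ * F (u τ))
    (S : Set ℝ) (hS0 : S ⊆ Ioi 0) (hS : ∀ t ∈ S, ∀ s, 0 < s → s ≤ t → s ∈ S)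
    (hpos : ∀ t ∈ S, 0 < u t)
    (hEn : ∀ t ∈ S, ∀ c < 0, ∃ τ ∈ S, t ≤ τ ∧ c < G (u τ))
    (τ₁ : ℝ) (hτ₁ : τ₁ ∈ S) (huτ₁ : u τ₁ = ξ₁) :
    (∀ β ∈ Ioo 0 βmax, ∃! s, s ∈ Ioo 0 τ₁ ∧
      (∀ τ ∈ Ioo 0 s, P β τ < 0) ∧ (∀ τ ∈ S, s < τ → 0 < P β τ)) ∧
    ∃ σ : ℝ → ℝ,
      (∀ β ∈ Ioo 0 βmax, σ β ∈ Ioo 0 τ₁ ∧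
        (∀ τ ∈ Ioo 0 (σ β), P β τ < 0) ∧ (∀ τ ∈ S, σ β < τ → 0 < P β τ)) ∧
      ContinuousOn σ (Ioo 0 βmax) ∧ StrictAntiOn σ (Ioo 0 βmax) := by
  rcases le_or_gt βmax 0 with hB | hB
  · have : Ioo 0 βmax = ∅ := Ioo_eq_empty (not_lt.2 hB)
    rw [this]
    exact ⟨fun β hβ => absurd hβ (notMem_empty β), fun _ => 0,
      fun β hβ => absurd hβ (notMem_empty β), continuousOn_empty _,
      fun β hβ => absurd hβ (notMem_empty β)⟩
  have hm0 : 0 < m := by linarith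
  have hb0 : 0 < b := by linarith
  obtain ⟨p, hp⟩ : ∃ p, p = 2 / m := ⟨_, rfl⟩
  rw [← hp] at hβmax
  simp only [← hp] at hF hP hG
  have hp0 : 0 < p := by rw [hp]; positivity
  have hξ0 : 0 < ξ₁ := by rw [hξ₁]; positivity
  have hξp : ξ₁ ^ p = b / a := by
    rw [hξ₁, ← Real.rpow_mul (by positivity), hp]
    have : m / 2 * (2 / m) = 1 := by field_simp
    rw [this, Real.rpow_one]
  have hpw : ∀ s : ℝ, 0 < s → s ^ (1 + p) = s * s ^ p := fun s hs => by
    rw [Real.rpow_add hs, Real.rpow_one]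
  have hFs : ∀ s : ℝ, 0 < s → F s = s * (a * s ^ p - b) := fun s hs => by
    rw [hF, hpw s hs]; ring
  have hgt : ∀ s : ℝ, ξ₁ < s → b < a * s ^ p := by
    intro s hs
    have := Real.rpow_lt_rpow hξ0.le hs hp0
    rw [hξp, div_lt_iff₀ ha] at this
    linarith
  have hle : ∀ s : ℝ, 0 < s → s ≤ ξ₁ → a * s ^ p ≤ b := by
    intro s h0 hs
    have := Real.rpow_le_rpow h0.le hs hp0.le
    rw [hξp, le_div_iff₀ ha] at this
    linarith
  have hαξ : ξ₁ < α := by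
    by_contra hc
    have h1 := hle α hα (not_lt.1 hc)
    have h2 : 0 < a * α ^ p := by positivity
    have h3 : 1 ≤ b / (a * α ^ p) := by rwa [one_le_div h2]
    rw [hβmax] at hB
    nlinarith
  have hFpos : ∀ s, ξ₁ < s → 0 < F s := fun s hs => by
    rw [hFs s (hξ0.trans hs)]
    exact mul_pos (hξ0.trans hs) (by linarith [hgt s hs])
  have hGneg : ∀ s, 0 < s → s ≤ ξ₁ → G s < 0 := fun s h0 hs => by
    have e : s ^ (2 + p) = s ^ 2 * s ^ p := by
      rw [Real.rpow_add h0, Real.rpow_two]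
    have h1 := hle s h0 hs
    have h2 : G s = s ^ 2 * ((a * s ^ p) / (2 + p) - b / 2) := by rw [hG, e]; ring
    rw [h2]
    have h3 : (a * s ^ p) / (2 + p) < b / 2 := by
      rw [div_lt_div_iff₀ (by linarith) (by norm_num)]
      nlinarith
    nlinarith [pow_pos h0 2]
  have hGd : ∀ s, HasDerivAt G (F s) s := by
    intro s
    have h1 := (Real.hasDerivAt_rpow_const (x := s) (p := 2 + p) (Or.inr (by linarith))).const_mul
      (a / (2 + p))
    have h2 := ((hasDerivAt_id s).pow 2).const_mul (b / 2)
    have h3 := h1.sub h2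
    have hGe : G = fun s => a / (2 + p) * s ^ (2 + p) - b / 2 * s ^ 2 := funext hG
    rw [hGe, hF]
    refine HasDerivAt.congr_deriv h3 ?_
    have : (2 + p - 1) = 1 + p := by ring
    rw [this]
    simp
    field_simp
  have hneg := aux_deriv_neg u F G hGd huc hud hud' hode hu'0 ξ₁ hξ0 hFpos hGneg (hu0 ▸ hαξ)
    S hS0 hS hpos hEn
  have hanti : ∀ t ∈ S, StrictAntiOn u (Icc 0 t) := by
    intro t ht
    apply strictAntiOn_of_deriv_neg (convex_Icc 0 t)
    · exact huc.mono Icc_subset_Ici_self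
    · intro s hs
      rw [interior_Icc] at hs
      exact hneg s (hS t ht s hs.1 hs.2.le)
  have hτ0 : 0 < τ₁ := hS0 hτ₁
  have hbig : ∀ t ∈ Ico 0 τ₁, ξ₁ < u t := fun t ht => by
    rw [← huτ₁]
    exact hanti τ₁ hτ₁ ⟨ht.1, ht.2.le⟩ (right_mem_Icc.2 hτ0.le) ht.2
  have hbig' : ∀ t ∈ Icc 0 τ₁, 0 < u t := fun t ht => by
    rcases eq_or_lt_of_le ht.2 with h | h
    · rw [h, huτ₁]; exact hξ0
    · exact hξ0.trans (hbig t ⟨ht.1, h⟩)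
  have hsmall : ∀ t ∈ S, τ₁ ≤ t → u t ≤ ξ₁ := fun t ht h => by
    rw [← huτ₁]
    exact (hanti t ht).antitoneOn ⟨hτ0.le, h⟩ (right_mem_Icc.2 (hτ0.le.trans h)) h
  -- the quotient function
  let H : ℝ → ℝ := fun t => m * (Real.cosh t * (1 - b / a * u t ^ (-p)))
  have hPH : ∀ β t, 0 < u t → P β t = 2 * a / m * u t ^ (1 + p) * (β - H t) := by
    intro β t ht
    have h1 : u t ^ p ≠ 0 := (Real.rpow_pos_of_pos ht p).ne'
    simp only [H]
    rw [hP, hFs _ ht, hpw _ ht, Real.rpow_neg ht.le]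
    field_simp
  have hcoef : ∀ t, 0 < u t → 0 < 2 * a / m * u t ^ (1 + p) := fun t ht => by positivity
  have hH0 : H 0 = βmax := by
    simp only [H]
    rw [hβmax, hu0, Real.cosh_zero, Real.rpow_neg hα.le]
    field_simp
  have hH1 : H τ₁ = 0 := by
    simp only [H]
    rw [huτ₁, Real.rpow_neg hξ0.le, hξp]
    field_simp
    try ring
  have hHc : ContinuousOn H (Icc 0 τ₁) := by
    apply ContinuousOn.mul continuousOn_const
    apply ContinuousOn.mul Real.continuous_cosh.continuousOn
    apply ContinuousOn.sub continuousOn_const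
    apply ContinuousOn.mul continuousOn_const
    apply ContinuousOn.rpow_const (huc.mono Icc_subset_Ici_self)
    intro t ht
    exact Or.inl (hbig' t ht).ne'
  have hHd : StrictAntiOn H (Icc 0 τ₁) := by
    apply strictAntiOn_of_deriv_neg (convex_Icc 0 τ₁) hHc
    intro t ht
    rw [interior_Icc] at ht
    have hu : 0 < u t := hbig' t ⟨ht.1.le, ht.2.le⟩
    have hξu := hbig t ⟨ht.1.le, ht.2⟩
    have h1 := (hud t ht.1).hasDerivAt.rpow_const (p := -p) (Or.inl hu.ne')
    have h2 := ((Real.hasDerivAt_cosh t).mul ((h1.const_mul (b / a)).const_sub 1)).const_mul m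
    have h3 : HasDerivAt H _ t := h2
    rw [h3.deriv]
    have hbd := aux_w_bound u F hud' hode hu'0 t ht.1 (by
      intro s hs
      have hlt : u t < u s := hanti τ₁ hτ₁ ⟨hs.1.le, hs.2.le.trans ht.2.le⟩
        ⟨ht.1.le, ht.2.le⟩ hs.2
      rw [hFs _ hu, hFs _ (hu.trans hlt)]
      have := Real.rpow_le_rpow hu.le hlt.le hp0.le
      apply mul_le_mul hlt.le _ (by linarith [hgt _ hξu]) (by linarith)
      have := mul_le_mul_of_nonneg_left this ha.le
      linarith)
    have hsinh : 0 < Real.sinh t := Real.sinh_pos_iff.2 ht.1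
    have hcosh : 1 < Real.cosh t := Real.one_lt_cosh.2 ht.1.ne'
    have hsq := Real.cosh_sq t
    have hfp := hFpos _ hξu
    -- combine the bound with the hyperbolic identity
    have key : Real.sinh t * F (u t) < 2 * Real.cosh t * (- deriv u t) := by
      have e1 : Real.sinh t ^ 2 * F (u t) < 2 * Real.cosh t * (F (u t) * (Real.cosh t - 1)) := by
        have : Real.sinh t ^ 2 < 2 * Real.cosh t * (Real.cosh t - 1) := by nlinarith
        nlinarith
      have e2 : 2 * Real.cosh t * (F (u t) * (Real.cosh t - 1)) ≤
          2 * Real.cosh t * (- (Real.sinh t * deriv u t)) :=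
        mul_le_mul_of_nonneg_left hbd (by linarith)
      have e3 : Real.sinh t * (Real.sinh t * F (u t)) <
          Real.sinh t * (2 * Real.cosh t * (- deriv u t)) := by nlinarith
      exact lt_of_mul_lt_mul_left e3 hsinh.le
    have hdn : 0 < - deriv u t := by linarith [hneg t (hS τ₁ hτ₁ t ht.1 ht.2.le)]
    have hbp : 2 ≤ b * p := by
      rw [hp, mul_div_assoc', le_div_iff₀ hm0]
      linarith
    have key2 : Real.sinh t * F (u t) < b * p * Real.cosh t * (- deriv u t) := by
      have : 2 * (Real.cosh t * (- deriv u t)) ≤ b * p * (Real.cosh t * (- deriv u t)) :=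
        mul_le_mul_of_nonneg_right hbp (by positivity)
      nlinarith
    have e4 : u t ^ (-p - 1) = (u t ^ p)⁻¹ * (u t)⁻¹ := by
      rw [sub_eq_add_neg, Real.rpow_add hu, Real.rpow_neg hu.le, Real.rpow_neg_one]
    rw [e4, Real.rpow_neg hu.le]
    rw [hFs _ hu] at key2
    have hv : 0 < u t ^ p := Real.rpow_pos_of_pos hu p
    have e5 : m * (Real.sinh t * (1 - b / a * (u t ^ p)⁻¹) +
        Real.cosh t * -(b / a * (deriv u t * -p * ((u t ^ p)⁻¹ * (u t)⁻¹)))) =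
        m / (a * u t ^ p * u t) * (Real.sinh t * (u t * (a * u t ^ p - b)) -
          b * p * Real.cosh t * (- deriv u t)) := by
      field_simp
      ring
    rw [e5]
    apply mul_neg_of_pos_of_neg (by positivity) (by linarith)
  obtain ⟨σ, hσ, hσc, hσa⟩ := aux_inverse H τ₁ βmax hτ0 hHd hHc hH0 hH1
  have hprop : ∀ β ∈ Ioo 0 βmax, σ β ∈ Ioo 0 τ₁ ∧
        (∀ τ ∈ Ioo 0 (σ β), P β τ < 0) ∧ (∀ τ ∈ S, σ β < τ → 0 < P β τ) := by
    intro β hβ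
    obtain ⟨h1, h2⟩ := hσ β hβ
    refine ⟨h1, ?_, ?_⟩
    · intro t ht
      have htI : t ∈ Icc 0 τ₁ := ⟨ht.1.le, ht.2.le.trans h1.2.le⟩
      have hu := hbig' t htI
      rw [hPH β t hu]
      have := hHd htI (Ioo_subset_Icc_self h1) ht.2
      exact mul_neg_of_pos_of_neg (hcoef t hu) (by linarith)
    · intro t ht hst
      have hu := hpos t ht
      rw [hPH β t hu]
      apply mul_pos (hcoef t hu)
      rcases le_or_gt t τ₁ with h | h
      · have := hHd (Ioo_subset_Icc_self h1) ⟨(hS0 ht).le, h⟩ hst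
        linarith
      · have h3 := hle _ hu (hsmall t ht h.le)
        have hv : 0 < u t ^ p := Real.rpow_pos_of_pos hu p
        have h4 : H t ≤ 0 := by
          simp only [H]
          rw [Real.rpow_neg hu.le]
          have : 1 ≤ b / a * (u t ^ p)⁻¹ := by
            rw [← div_eq_mul_inv, div_div, one_le_div (by positivity)]
            exact h3
          apply mul_nonpos_of_nonneg_of_nonpos hm0.le
          exact mul_nonpos_of_nonneg_of_nonpos (Real.cosh_pos t).le (by linarith)
        linarith [hβ.1]
  refine ⟨?_, σ, hprop, hσc, hσa⟩
  intro β hβ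
  obtain ⟨g1, g2, g3⟩ := hprop β hβ
  refine ⟨σ β, ⟨g1, g2, g3⟩, ?_⟩
  rintro s ⟨k1, k2, k3⟩
  have hmemS : ∀ t, 0 < t → t < τ₁ → t ∈ S := fun t h h' => hS τ₁ hτ₁ t h h'.le
  rcases lt_trichotomy s (σ β) with h | h | h
  · exfalso
    obtain ⟨r, hr1, hr2⟩ := exists_between h
    have q1 := g2 r ⟨k1.1.trans hr1, hr2⟩
    have q2 := k3 r (hmemS r (k1.1.trans hr1) (hr2.trans g1.2)) hr1
    linarith
  · exact h
  · exfalso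
    obtain ⟨r, hr1, hr2⟩ := exists_between h
    have q1 := k2 r ⟨g1.1.trans hr1, hr2⟩
    have q2 := g3 r (hmemS r (g1.1.trans hr1) (hr2.trans k1.2)) hr1
    linarith



/-- Structure of the inhomogeneity `Φ` (Lemma 5.7): assume `b̃ ≥ m`, let
`α ∈ G ∪ N` with solution `u`, `ξ₁ = (b̃/ã)^{m/2}`, `τ₁ ∈ (0, b(α))` the point
with `u(τ₁) = ξ₁`, and `β̄ = m·(1 − b̃/(ã·α^{2/m}))`.  For `β ∈ (0, β̄)` let
`Φ_β(τ) = (2βã/m)·u(τ)^{1+2/m} − 2·cosh(τ)·f(u(τ))`.  Then there is a unique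
`σ(β) ∈ (0, τ₁)` with `Φ_β < 0` on `(0, σ(β))` and `Φ_β > 0` on `(σ(β), b(α))`;
moreover `β ↦ σ(β)` is continuous and strictly decreasing on `(0, β̄)`.
The two conjuncts treat the cases `α ∈ N` and `α ∈ G`. -/
theorem inhomogeneity_structure
    (m a b : ℝ) (hm : 2 < m) (ha : 0 < a) (hb : m ≤ b)
    (F : ℝ → ℝ) (hF : ∀ s, F s = a * s ^ (1 + 2 / m) - b * s)
    (α : ℝ) (hα : 0 < α)
    (u : ℝ → ℝ)
    (huc : ContinuousOn u (Ici 0))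
    (hud : ∀ τ ∈ Ioi (0 : ℝ), DifferentiableAt ℝ u τ)
    (hud' : ∀ τ ∈ Ioi (0 : ℝ), DifferentiableAt ℝ (deriv u) τ)
    (hode : ∀ τ ∈ Ioi (0 : ℝ),
      deriv (deriv u) τ + (Real.cosh τ / Real.sinh τ) * deriv u τ + F (u τ) = 0)
    (hu0 : u 0 = α)
    (hu'0 : Tendsto (deriv u) (nhdsWithin 0 (Ioi 0)) (nhds 0))
    (ξ₁ : ℝ) (hξ₁ : ξ₁ = (b / a) ^ (m / 2))
    (βmax : ℝ) (hβmax : βmax = m * (1 - b / (a * α ^ (2 / m))))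
    (P : ℝ → ℝ → ℝ)
    (hP : ∀ β τ, P β τ = 2 * β * a / m * u τ ^ (1 + 2 / m)
        - 2 * Real.cosh τ * F (u τ)) :
    (∀ bα : ℝ, 0 < bα → u bα = 0 → (∀ τ ∈ Ico 0 bα, 0 < u τ) →
        ∀ τ₁ ∈ Ioo 0 bα, u τ₁ = ξ₁ →
          (∀ β ∈ Ioo 0 βmax, ∃! s, s ∈ Ioo 0 τ₁ ∧
              (∀ τ ∈ Ioo 0 s, P β τ < 0) ∧ (∀ τ ∈ Ioo s bα, 0 < P β τ)) ∧
          ∃ σ : ℝ → ℝ,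
            (∀ β ∈ Ioo 0 βmax, σ β ∈ Ioo 0 τ₁ ∧
              (∀ τ ∈ Ioo 0 (σ β), P β τ < 0) ∧ (∀ τ ∈ Ioo (σ β) bα, 0 < P β τ)) ∧
            ContinuousOn σ (Ioo 0 βmax) ∧ StrictAntiOn σ (Ioo 0 βmax)) ∧
    ((∀ τ ∈ Ioi (0 : ℝ), 0 < u τ) → Tendsto u atTop (nhds 0) →
        ∀ τ₁ ∈ Ioi (0 : ℝ), u τ₁ = ξ₁ →
          (∀ β ∈ Ioo 0 βmax, ∃! s, s ∈ Ioo 0 τ₁ ∧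
              (∀ τ ∈ Ioo 0 s, P β τ < 0) ∧ (∀ τ ∈ Ioi s, 0 < P β τ)) ∧
          ∃ σ : ℝ → ℝ,
            (∀ β ∈ Ioo 0 βmax, σ β ∈ Ioo 0 τ₁ ∧
              (∀ τ ∈ Ioo 0 (σ β), P β τ < 0) ∧ (∀ τ ∈ Ioi (σ β), 0 < P β τ)) ∧
            ContinuousOn σ (Ioo 0 βmax) ∧ StrictAntiOn σ (Ioo 0 βmax)) := by
  obtain ⟨G, hG⟩ : ∃ G : ℝ → ℝ, ∀ s, G s = a / (2 + 2 / m) * s ^ (2 + 2 / m) - b / 2 * s ^ 2 :=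
    ⟨_, fun _ => rfl⟩
  have hp0 : 0 < 2 / m := by
    have : 0 < m := by linarith
    positivity
  have hG0 : G 0 = 0 := by
    rw [hG, Real.zero_rpow (by linarith)]
    simp
  have hGc : Continuous G := by
    have : G = fun s => a / (2 + 2 / m) * s ^ (2 + 2 / m) - b / 2 * s ^ 2 := funext hG
    rw [this]
    have h1 : Continuous fun s : ℝ => s ^ (2 + 2 / m) :=
      Real.continuous_rpow_const (by linarith)
    fun_prop
  constructor
  · intro B hB huB hpos τ₁ hτ₁ huτ₁
    have key := aux_main m a b hm ha hb F hF G hG α hα u huc hud hud' hode hu0 hu'0 ξ₁ hξ₁ βmax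
      hβmax P hP (Ioo 0 B) (fun t ht => ht.1) (fun t ht s h h' => ⟨h, h'.trans_lt ht.2⟩)
      (fun t ht => hpos t ⟨ht.1.le, ht.2⟩) (by
        intro t ht c hc
        have hcw : Tendsto (fun s => G (u s)) (nhdsWithin B (Iio B)) (nhds (G (u B))) :=
          (hGc.continuousAt.comp (hud B hB).continuousAt).continuousWithinAt
        rw [huB, hG0] at hcw
        have h1 := hcw.eventually_const_lt hc
        have h2 : Ioo t B ∈ nhdsWithin B (Iio B) := Ioo_mem_nhdsLT ht.2
        obtain ⟨r, hr1, hr2⟩ := (h1.and h2).exists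
        exact ⟨r, ⟨ht.1.trans hr2.1, hr2.2⟩, hr2.1.le, hr1⟩) τ₁ hτ₁ huτ₁
    have conv : ∀ β s, s ∈ Ioo 0 τ₁ →
        ((∀ τ ∈ Ioo 0 B, s < τ → 0 < P β τ) ↔ ∀ τ ∈ Ioo s B, 0 < P β τ) := by
      intro β s hs
      exact ⟨fun h τ hτ => h τ ⟨hs.1.trans hτ.1, hτ.2⟩ hτ.1, fun h τ hτ h' => h τ ⟨h', hτ.2⟩⟩
    obtain ⟨k1, σ, k2, k3⟩ := key
    refine ⟨fun β hβ => ?_, σ, fun β hβ => ?_, k3⟩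
    · obtain ⟨s, ⟨q1, q2, q3⟩, q4⟩ := k1 β hβ
      exact ⟨s, ⟨q1, q2, (conv β s q1).1 q3⟩,
        fun y hy => q4 y ⟨hy.1, hy.2.1, (conv β y hy.1).2 hy.2.2⟩⟩
    · obtain ⟨q1, q2, q3⟩ := k2 β hβ
      exact ⟨q1, q2, (conv β _ q1).1 q3⟩
  · intro hpos hlim τ₁ hτ₁ huτ₁
    have key := aux_main m a b hm ha hb F hF G hG α hα u huc hud hud' hode hu0 hu'0 ξ₁ hξ₁ βmax
      hβmax P hP (Ioi 0) (fun t ht => ht) (fun t ht s h h' => h)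
      hpos (by
        intro t ht c hc
        have hcw : Tendsto (fun s => G (u s)) atTop (nhds (G 0)) :=
          (hGc.tendsto 0).comp hlim
        rw [hG0] at hcw
        have h1 := hcw.eventually_const_lt hc
        obtain ⟨r, hr1, hr2⟩ := (h1.and (eventually_ge_atTop t)).exists
        exact ⟨r, lt_of_lt_of_le ht hr2, hr2, hr1⟩) τ₁ hτ₁ huτ₁
    have conv : ∀ β s, s ∈ Ioo 0 τ₁ →
        ((∀ τ ∈ Ioi (0:ℝ), s < τ → 0 < P β τ) ↔ ∀ τ ∈ Ioi s, 0 < P β τ) := by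
      intro β s hs
      exact ⟨fun h τ hτ => h τ (hs.1.trans hτ) hτ, fun h τ hτ h' => h τ h'⟩
    obtain ⟨k1, σ, k2, k3⟩ := key
    refine ⟨fun β hβ => ?_, σ, fun β hβ => ?_, k3⟩
    · obtain ⟨s, ⟨q1, q2, q3⟩, q4⟩ := k1 β hβ
      exact ⟨s, ⟨q1, q2, (conv β s q1).1 q3⟩,
        fun y hy => q4 y ⟨hy.1, hy.2.1, (conv β y hy.1).2 hy.2.2⟩⟩
    · obtain ⟨q1, q2, q3⟩ := k2 β hβ
      exact ⟨q1, q2, (conv β _ q1).1 q3⟩
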